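/- Let α, a, b be complex numbers such that none of α+a, α−a, α+b, α−b is a nonpositive integer. Then ∑_{k=0}^∞ (k+α)/(((k+α)² − a²)((k+α)² − b²)) = (1/2) ∑_{n=1}^∞ (−1)^{n−1} · (1+a+b)_{n−1}(1+a−b)_{n−1}(1−a+b)_{n−1}(1−a−b)_{n−1} · (5n² − 6n(1−α) + 2(1−α)² − a² − b²) / (n · C(2n, n) · (α+a)_n (α−a)_n (α+b)_n (α−b)_n). -/

import Mathlib

/-- Pochhammer symbol `(x)_n = x (x+1) ⋯ (x+n-1)`. -/
noncomputable def poch (x : ℂ) (n : ℕ) : ℂ := ∏ i ∈ Finset.range n, (x + i)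

/-!
With `B a b x = (x² - a²)(x² - b²)` and
`h n x = (-1)ⁿ ∏_{i < n} B (a+b) (a-b) (1+i) / (2 C(2n,n) ∏_{j ≤ n} B a b (x+j))`,
the functions `F n x = (2x + n) h n x` and `G n x = P (n+1) x h n x / (2 (2n+1))`, where `P` is the
quadratic factor of the right-hand series, form a WZ pair:
`F n x - F (n+1) x = G n x - G n (x+1)`. Summing this over all `n` and all `x = α + k` in the two
possible orders gives `∑ₖ F 0 (α+k) = ∑ₙ G n α`, which is the claim.

Both double series converge absolutely: `h (n+1) x / h n x` behaves like
`-(n+1)⁴ / (4 (x+n+1)⁴)`, so for large `n` it is bounded by a constant `< 1`, uniformly in `k`,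
while `h n (α+k) = O(k⁻⁴)` for each `n`.
-/

open Asymptotics Filter Topology

section DoubleSeries

lemma tsum_sub_succ {E : Type*} [AddCommGroup E] [TopologicalSpace E] [IsTopologicalAddGroup E]
    [T2Space E] {f : ℕ → E} (hf : Summable f) : ∑' n, (f n - f (n + 1)) = f 0 := by
  rw [hf.tsum_sub ((summable_nat_add_iff 1).2 hf), hf.tsum_eq_zero_add, add_sub_cancel_right]

theorem tsum_eq_tsum_of_wz_pair {E : Type*} [AddCommGroup E] [UniformSpace E]
    [IsUniformAddGroup E] [CompleteSpace E] [T2Space E] {F G : ℕ × ℕ → E}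
    (hF : Summable F) (hG : Summable G)
    (hFG : ∀ n k, F (n, k) - F (n + 1, k) = G (n, k) - G (n, k + 1)) :
    ∑' k, F (0, k) = ∑' n, G (n, 0) := by
  have hF_shift : Summable fun p : ℕ × ℕ => F (p.1 + 1, p.2) :=
    hF.comp_injective ((add_left_injective 1).prodMap Function.injective_id)
  calc ∑' k, F (0, k) = ∑' k, ∑' n, (F (n, k) - F (n + 1, k)) :=
        tsum_congr fun k => (tsum_sub_succ (hF.prod_symm.prod_factor k)).symm
    _ = ∑' n, ∑' k, (F (n, k) - F (n + 1, k)) := (hF.sub hF_shift).tsum_comm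
    _ = ∑' n, ∑' k, (G (n, k) - G (n, k + 1)) := by simp only [hFG]
    _ = ∑' n, G (n, 0) := tsum_congr fun n => tsum_sub_succ (hG.prod_factor n)

theorem summable_prod_of_ratio_norm_eventually_le {ι E : Type*} [NormedAddCommGroup E]
    [CompleteSpace E] {f : ℕ × ι → E} {r : ℝ} (hr : r < 1)
    (hf : ∀ n, Summable fun k => ‖f (n, k)‖)
    (hratio : ∀ᶠ n in atTop, ∀ k, ‖f (n + 1, k)‖ ≤ r * ‖f (n, k)‖) : Summable f := by
  refine .of_norm ((summable_prod_of_nonneg fun _ => norm_nonneg _).2 ⟨hf, ?_⟩)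
  refine summable_of_ratio_norm_eventually_le hr (hratio.mono fun n hn => ?_)
  rw [Real.norm_of_nonneg (tsum_nonneg fun _ => norm_nonneg _),
    Real.norm_of_nonneg (tsum_nonneg fun _ => norm_nonneg _), ← tsum_mul_left]
  exact (hf (n + 1)).tsum_le_tsum hn ((hf n).mul_left r)

end DoubleSeries

section Biquadratic

variable {R : Type*} [CommRing R]

/-- The biquadratic polynomial with roots `±a` and `±b`, the denominator of the left-hand series. -/
def biquadratic (a b x : R) : R := (x ^ 2 - a ^ 2) * (x ^ 2 - b ^ 2)

/-- The Pochhammer-like product `∏_{j < n} B(x + j)` of values of `B = biquadratic a b`. It gives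
both products of four Pochhammer symbols in the right-hand series; the numerator is the case
`x = 1` with roots `±(a + b)` and `±(a - b)`. -/
def biquadraticPoch (a b x : R) (n : ℕ) : R := ∏ j ∈ Finset.range n, biquadratic a b (x + j)

lemma biquadratic_eq_mul (a b x : R) :
    biquadratic a b x = (x + a) * (x - a) * (x + b) * (x - b) := by
  unfold biquadratic; ring

lemma biquadraticPoch_succ (a b x : R) (n : ℕ) :
    biquadraticPoch a b x (n + 1) = biquadraticPoch a b x n * biquadratic a b (x + n) :=
  Finset.prod_range_succ _ n

lemma biquadraticPoch_succ' (a b x : R) (n : ℕ) :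
    biquadraticPoch a b x (n + 1) = biquadraticPoch a b (x + 1) n * biquadratic a b x := by
  simp [biquadraticPoch, Finset.prod_range_succ', add_comm, add_left_comm]

lemma biquadraticPoch_eq_mul_poch (a b x : ℂ) (n : ℕ) :
    biquadraticPoch a b x n =
      poch (x + a) n * poch (x - a) n * poch (x + b) n * poch (x - b) n := by
  simp only [biquadraticPoch, poch, ← Finset.prod_mul_distrib, biquadratic_eq_mul]
  exact Finset.prod_congr rfl fun j _ => by ring

lemma biquadraticPoch_add_sub_one (a b : ℂ) (n : ℕ) :
    biquadraticPoch (a + b) (a - b) 1 n =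
      poch (1 + a + b) n * poch (1 + a - b) n * poch (1 - a + b) n * poch (1 - a - b) n := by
  rw [biquadraticPoch_eq_mul_poch, ← add_assoc, ← sub_sub, ← add_sub_assoc, ← sub_add]
  ring

/-- The quadratic factor of the right-hand series, with `N ≥ 1` the summation index of the paper
and `x` in place of `α`. -/
def wzQuadratic (a b N x : R) : R :=
  5 * N ^ 2 - 6 * N * (1 - x) + 2 * (1 - x) ^ 2 - a ^ 2 - b ^ 2

lemma biquadratic_wz_identity (a b x ν : R) :
    2 * (2 * ν + 1) * (2 * x + ν) * biquadratic a b (x + (ν + 1)) +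
        (ν + 1) * biquadratic (a + b) (a - b) (1 + ν) * (2 * x + (ν + 1)) =
      wzQuadratic a b (ν + 1) x * biquadratic a b (x + (ν + 1)) -
        wzQuadratic a b (ν + 1) (x + 1) * biquadratic a b x := by
  unfold biquadratic wzQuadratic; ring

end Biquadratic

section WZPair

variable {K : Type*} [Field K]

/-- The common hypergeometric factor of the two members of the WZ pair. -/
def wzKernel (a b : K) (n : ℕ) (x : K) : K :=
  (-1) ^ n * biquadraticPoch (a + b) (a - b) 1 n /
    (2 * n.centralBinom * biquadraticPoch a b x (n + 1))

/-- The quotient of `wzKernel a b (n + 1) x` by `wzKernel a b n x`. -/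
def wzRatio (a b : K) (n : ℕ) (x : K) : K :=
  -((n + 1) * biquadratic (a + b) (a - b) (1 + n)) /
    (2 * (2 * n + 1) * biquadratic a b (x + (n + 1)))

/-- The member of the WZ pair that is summed over the shifts of `x`. -/
def wzF (a b : K) (n : ℕ) (x : K) : K := wzKernel a b n x * (2 * x + n)

/-- The member of the WZ pair that is summed over `n`. -/
def wzG (a b : K) (n : ℕ) (x : K) : K :=
  wzKernel a b n x * wzQuadratic a b (n + 1) x / (2 * (2 * n + 1))

lemma wzKernel_add_one (a b : K) (n : ℕ) {x : K} (hx : biquadratic a b x ≠ 0) :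
    wzKernel a b n (x + 1) =
      wzKernel a b n x * biquadratic a b x / biquadratic a b (x + (n + 1)) := by
  rw [wzKernel, wzKernel, biquadraticPoch_succ, biquadraticPoch_succ' a b x, add_assoc x 1,
    add_comm (1 : K)]
  field_simp

variable [CharZero K]

lemma cast_centralBinom_succ (n : ℕ) :
    (n + 1 : K) * (n + 1).centralBinom = 2 * (2 * n + 1) * n.centralBinom := by
  exact_mod_cast n.succ_mul_centralBinom_succ

lemma wzKernel_succ (a b : K) (n : ℕ) (x : K) :
    wzKernel a b (n + 1) x = wzKernel a b n x * wzRatio a b n x := by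
  have hn : (n + 1 : K) ≠ 0 := n.cast_add_one_ne_zero
  have hbinom : ((n + 1).centralBinom : K) = 2 * (2 * n + 1) * n.centralBinom / (n + 1) := by
    rw [← cast_centralBinom_succ, mul_div_cancel_left₀ _ hn]
  simp only [wzKernel, wzRatio, hbinom, biquadraticPoch_succ _ _ _ n,
    biquadraticPoch_succ _ _ _ (n + 1), pow_succ, Nat.cast_add_one]
  field_simp

lemma wzF_zero (a b x : K) : wzF a b 0 x = x / biquadratic a b x := by
  simp only [wzF, wzKernel, biquadraticPoch, pow_zero, Finset.prod_range_zero, zero_add,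
    Finset.prod_range_one, Nat.centralBinom_zero, Nat.cast_zero, Nat.cast_one, add_zero, mul_one]
  rw [div_mul_eq_mul_div, one_mul, mul_div_mul_left _ _ two_ne_zero]

theorem wzF_sub_wzF (a b : K) (n : ℕ) {x : K} (hx : biquadratic a b x ≠ 0)
    (hxn : biquadratic a b (x + (n + 1)) ≠ 0) :
    wzF a b n x - wzF a b (n + 1) x = wzG a b n x - wzG a b n (x + 1) := by
  have hn : (2 * n + 1 : K) ≠ 0 := by exact_mod_cast (2 * n).succ_ne_zero
  simp only [wzF, wzG, wzKernel_succ, wzKernel_add_one a b n hx, wzRatio, Nat.cast_add_one]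
  field_simp
  linear_combination wzKernel a b n x * biquadratic_wz_identity a b x (n : K)

end WZPair

section Convergence

variable (a b α : ℂ)

lemma add_natCast_isEquivalent : (fun m : ℕ => α + m) ~[atTop] fun m => (m : ℂ) :=
  IsEquivalent.refl.const_add_of_norm_tendsto_atTop
    (by simpa [Function.comp_def] using tendsto_natCast_atTop_atTop)

lemma biquadratic_isEquivalent :
    (fun m : ℕ => biquadratic a b (α + m)) ~[atTop] fun m => (m : ℂ) ^ 4 := by
  have hfactor := (((add_natCast_isEquivalent (α + a)).mul (add_natCast_isEquivalent (α - a))).mul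
    (add_natCast_isEquivalent (α + b))).mul (add_natCast_isEquivalent (α - b))
  convert hfactor using 1 <;> ext m
  · simp only [biquadratic_eq_mul, Pi.mul_apply]; ring
  · simp only [Pi.mul_apply]; ring

lemma eventually_norm_biquadratic_mem_Icc :
    ∀ᶠ m : ℕ in atTop,
      ‖biquadratic a b (α + m)‖ ∈ Set.Icc (7 / 8 * (m : ℝ) ^ 4) (9 / 8 * (m : ℝ) ^ 4) := by
  have hsmall := (biquadratic_isEquivalent a b α).isLittleO.def (by norm_num : (0 : ℝ) < 1 / 8)
  filter_upwards [hsmall] with m hm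
  have habs := (abs_norm_sub_norm_le (biquadratic a b (α + m)) ((m : ℂ) ^ 4)).trans hm
  rw [norm_pow, Complex.norm_natCast, abs_le] at habs
  constructor <;> linarith

lemma inv_biquadratic_isBigO :
    (fun m : ℕ => (biquadratic a b (α + m))⁻¹) =O[atTop] fun m => ((m : ℝ) ^ 4)⁻¹ := by
  refine (biquadratic_isEquivalent a b α).inv.isBigO.trans (isBigO_of_le _ fun m => ?_)
  simp

lemma wzRatio_isBigO_one (n : ℕ) :
    (fun k : ℕ => wzRatio a b n (α + k)) =O[atTop] fun _ => (1 : ℝ) := by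
  have hinv : (fun m : ℕ => ((m : ℝ) ^ 4)⁻¹) =O[atTop] fun _ => (1 : ℝ) :=
    (tendsto_inv_atTop_zero.comp
      ((tendsto_pow_atTop four_ne_zero).comp tendsto_natCast_atTop_atTop)).isBigO_one ℝ
  refine (((inv_biquadratic_isBigO a b (α + (n + 1))).trans hinv).const_mul_left
    (-((n + 1) * biquadratic (a + b) (a - b) (1 + n)) / (2 * (2 * n + 1)))).congr_left fun k => ?_
  rw [wzRatio, add_right_comm, ← div_eq_mul_inv, div_div]

lemma wzKernel_isBigO (n : ℕ) :
    (fun k : ℕ => wzKernel a b n (α + k)) =O[atTop] fun k => ((k : ℝ) ^ 4)⁻¹ := by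
  induction n with
  | zero =>
    refine ((inv_biquadratic_isBigO a b α).const_mul_left (1 / 2)).congr_left fun k => ?_
    simp [wzKernel, biquadraticPoch, mul_comm]
  | succ n ih => simpa [wzKernel_succ] using ih.mul (wzRatio_isBigO_one a b α n)

lemma norm_natCast_add_one (n : ℕ) : ‖(n + 1 : ℂ)‖ = n + 1 := by
  exact_mod_cast Complex.norm_natCast (n + 1)

lemma eventually_norm_wzRatio_le :
    ∀ᶠ n : ℕ in atTop, ∀ k : ℕ, ‖wzRatio a b n (α + k)‖ ≤ 9 / 14 := by
  filter_upwards [eventually_forall_ge_atTop.2 (eventually_norm_biquadratic_mem_Icc a b α),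
    eventually_norm_biquadratic_mem_Icc (a + b) (a - b) 1] with n hden hnum k
  have hnum_le : ‖biquadratic (a + b) (a - b) (1 + n)‖ ≤ 9 / 8 * ((n : ℝ) + 1) ^ 4 :=
    hnum.2.trans (by gcongr; linarith)
  have hle_den : 7 / 8 * ((n : ℝ) + 1) ^ 4 ≤ ‖biquadratic a b (α + k + (n + 1))‖ := by
    have hkn := (hden (k + (n + 1)) (by lia)).1
    push_cast [← add_assoc] at hkn ⊢
    refine le_trans ?_ hkn
    gcongr
    simp
  have hfactor : ‖(2 * (2 * n + 1) : ℂ)‖ = 2 * (2 * n + 1) := by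
    exact_mod_cast Complex.norm_natCast (2 * (2 * n + 1))
  rw [wzRatio, norm_div, norm_neg, norm_mul, norm_mul, norm_natCast_add_one, hfactor]
  calc ((n : ℝ) + 1) * ‖biquadratic (a + b) (a - b) (1 + n)‖ /
        (2 * (2 * n + 1) * ‖biquadratic a b (α + k + (n + 1))‖)
      ≤ (n + 1) * (9 / 8 * (n + 1) ^ 4) / (2 * (n + 1) * (7 / 8 * (n + 1) ^ 4)) := by
        gcongr; linarith
    _ = 9 / 14 := by field_simp; norm_num

/-- The weight `(n + 1) (k + 1)` on index pairs, whose square dominates every polynomial in `n` and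
`k` of total degree at most `2`. -/
def wzWeight (p : ℕ × ℕ) : ℂ := (p.1 + 1) * (p.2 + 1)

/-- A common majorant, up to a constant, of the two members of the WZ pair at `x = α + k`. -/
noncomputable def wzMajorant (p : ℕ × ℕ) : ℂ :=
  wzKernel a b p.1 (α + p.2) * wzWeight p ^ 2

lemma summable_norm_wzMajorant_right (n : ℕ) : Summable fun k => ‖wzMajorant a b α (n, k)‖ := by
  have hweight : (fun k : ℕ => ((n + 1 : ℂ) * (k + 1)) ^ 2) =O[atTop] fun k => (k : ℝ) ^ 2 := by
    have hk : (fun k : ℕ => (k + 1 : ℂ)) =O[atTop] fun k => (k : ℝ) := by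
      simpa [add_comm] using (add_natCast_isEquivalent 1).isBigO.norm_right
    exact (hk.const_mul_left _).pow 2
  refine summable_of_isBigO_nat (Real.summable_nat_pow_inv.2 one_lt_two)
    (((wzKernel_isBigO a b α n).mul hweight).norm_left.congr_right fun k => ?_)
  rcases eq_or_ne k 0 with rfl | hk
  · simp
  · field_simp

lemma summable_wzMajorant : Summable (wzMajorant a b α) := by
  refine summable_prod_of_ratio_norm_eventually_le (r := 3 / 4) (by norm_num)
    (summable_norm_wzMajorant_right a b α) ?_
  filter_upwards [eventually_norm_wzRatio_le a b α, eventually_ge_atTop 12] with n hratio hn k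
  have hn' : (12 : ℝ) ≤ n := by exact_mod_cast hn
  simp only [wzMajorant, wzWeight, wzKernel_succ, norm_mul, norm_pow, mul_pow, norm_natCast_add_one]
  have hweight : (((n + 1 : ℕ) : ℝ) + 1) ^ 2 ≤ 7 / 6 * (n + 1) ^ 2 := by push_cast; nlinarith
  calc ‖wzKernel a b n (α + k)‖ * ‖wzRatio a b n (α + k)‖ *
        ((((n + 1 : ℕ) : ℝ) + 1) ^ 2 * (k + 1) ^ 2)
      ≤ ‖wzKernel a b n (α + k)‖ * (9 / 14) * (7 / 6 * (n + 1) ^ 2 * (k + 1) ^ 2) := by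
        gcongr; exact hratio k
    _ = 3 / 4 * (‖wzKernel a b n (α + k)‖ * ((n + 1) ^ 2 * (k + 1) ^ 2)) := by ring

lemma const_isBigO_wzWeight (c : ℂ) : (fun _ : ℕ × ℕ => c) =O[⊤] wzWeight := by
  refine IsBigO.of_bound ‖c‖ (.of_forall fun p => le_mul_of_one_le_right (norm_nonneg c) ?_)
  rw [wzWeight, norm_mul, norm_natCast_add_one, norm_natCast_add_one]
  exact one_le_mul_of_one_le_of_one_le (by simp) (by simp)

lemma fst_isBigO_wzWeight : (fun p : ℕ × ℕ => (p.1 : ℂ)) =O[⊤] wzWeight := by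
  refine isBigO_of_le ⊤ fun p => ?_
  rw [wzWeight, norm_mul, norm_natCast_add_one, norm_natCast_add_one, Complex.norm_natCast]
  exact (lt_add_one _).le.trans (le_mul_of_one_le_right (by positivity) (by simp))

lemma snd_isBigO_wzWeight : (fun p : ℕ × ℕ => (p.2 : ℂ)) =O[⊤] wzWeight := by
  refine isBigO_of_le ⊤ fun p => ?_
  rw [wzWeight, norm_mul, norm_natCast_add_one, norm_natCast_add_one, Complex.norm_natCast]
  exact (lt_add_one _).le.trans (le_mul_of_one_le_left (by positivity) (by simp))

lemma linear_isBigO_wzWeight_sq :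
    (fun p : ℕ × ℕ => 2 * (α + p.2) + p.1) =O[⊤] fun p => wzWeight p ^ 2 := by
  have hlin := (((const_isBigO_wzWeight α).add snd_isBigO_wzWeight).const_mul_left 2).add
    fst_isBigO_wzWeight
  simpa [sq] using hlin.mul (const_isBigO_wzWeight 1)

lemma wzQuadratic_isBigO_wzWeight_sq :
    (fun p : ℕ × ℕ => wzQuadratic a b (p.1 + 1) (α + p.2)) =O[⊤]
      fun p => wzWeight p ^ 2 := by
  have hN := fst_isBigO_wzWeight.add (const_isBigO_wzWeight 1)
  have hx := (const_isBigO_wzWeight 1).sub ((const_isBigO_wzWeight α).add snd_isBigO_wzWeight)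
  have ha := (const_isBigO_wzWeight a).pow 2
  have hb := (const_isBigO_wzWeight b).pow 2
  have hNx := hN.mul hx
  simp only [← sq] at hNx
  refine ((((hN.pow 2).const_mul_left 5).sub (hNx.const_mul_left 6)).add
    ((hx.pow 2).const_mul_left 2) |>.sub ha |>.sub hb).congr_left fun p => ?_
  rw [wzQuadratic, mul_assoc 6]

lemma summable_wzF : Summable fun p : ℕ × ℕ => wzF a b p.1 (α + p.2) :=
  summable_of_isBigO (summable_wzMajorant a b α).norm
    (((isBigO_refl _ ⊤).mul (linear_isBigO_wzWeight_sq α)).norm_right.mono le_top)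

lemma summable_wzG : Summable fun p : ℕ × ℕ => wzG a b p.1 (α + p.2) := by
  refine summable_of_isBigO (summable_wzMajorant a b α).norm
    (IsBigO.mono (IsBigO.trans (isBigO_of_le ⊤ fun p => ?_)
    ((isBigO_refl _ ⊤).mul (wzQuadratic_isBigO_wzWeight_sq a b α)).norm_right) le_top)
  have hfactor : (1 : ℝ) ≤ ‖(2 * (2 * p.1 + 1) : ℂ)‖ := by
    rw [show (2 * (2 * p.1 + 1) : ℂ) = (2 * (2 * p.1 + 1) : ℕ) by push_cast; rfl,
      Complex.norm_natCast]
    exact_mod_cast Nat.succ_le_of_lt (by positivity)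
  rw [wzG, norm_div]
  exact div_le_self (norm_nonneg _) hfactor

end Convergence

theorem tsum_wzF_zero_eq_tsum_wzG {a b α : ℂ} (hα : ∀ m : ℕ, biquadratic a b (α + m) ≠ 0) :
    ∑' k : ℕ, wzF a b 0 (α + k) = ∑' n, wzG a b n α := by
  have hFG (n k : ℕ) : wzF a b n (α + k) - wzF a b (n + 1) (α + k) =
      wzG a b n (α + k) - wzG a b n (α + (k + 1 : ℕ)) := by
    have hkn := hα (k + (n + 1))
    push_cast [← add_assoc] at hkn ⊢
    exact wzF_sub_wzF a b n (hα k) (by simpa only [← add_assoc] using hkn)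
  simpa using tsum_eq_tsum_of_wz_pair (summable_wzF a b α) (summable_wzG a b α) hFG

theorem wzG_eq (a b α : ℂ) (n : ℕ) :
    wzG a b n α = 1 / 2 * ((-1) ^ n *
      (poch (1 + a + b) n * poch (1 + a - b) n * poch (1 - a + b) n * poch (1 - a - b) n) *
      wzQuadratic a b (n + 1) α /
      ((n + 1) * (Nat.choose (2 * (n + 1)) (n + 1)) * poch (α + a) (n + 1) * poch (α - a) (n + 1) *
        poch (α + b) (n + 1) * poch (α - b) (n + 1))) := by
  rw [← Nat.centralBinom_eq_two_mul_choose, cast_centralBinom_succ, wzG, wzKernel,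
    biquadraticPoch_add_sub_one, biquadraticPoch_eq_mul_poch]
  simp only [div_eq_mul_inv, mul_inv]
  ring

theorem stmt11 (α a b : ℂ)
    (h1 : ∀ k : ℕ, α + a ≠ -(k : ℂ)) (h2 : ∀ k : ℕ, α - a ≠ -(k : ℂ))
    (h3 : ∀ k : ℕ, α + b ≠ -(k : ℂ)) (h4 : ∀ k : ℕ, α - b ≠ -(k : ℂ)) :
    ∑' k : ℕ,
        ((k : ℂ) + α) / ((((k : ℂ) + α) ^ 2 - a ^ 2) * (((k : ℂ) + α) ^ 2 - b ^ 2))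
      = (1 / 2) * ∑' n : ℕ,
          (-1 : ℂ) ^ n *
            (poch (1 + a + b) n * poch (1 + a - b) n * poch (1 - a + b) n *
              poch (1 - a - b) n) *
            (5 * ((n : ℂ) + 1) ^ 2 - 6 * ((n : ℂ) + 1) * (1 - α) + 2 * (1 - α) ^ 2 -
              a ^ 2 - b ^ 2) /
            (((n : ℂ) + 1) * (Nat.choose (2 * (n + 1)) (n + 1) : ℂ) *
              poch (α + a) (n + 1) * poch (α - a) (n + 1) * poch (α + b) (n + 1) *
              poch (α - b) (n + 1)) := by
  have hα (m : ℕ) : biquadratic a b (α + m) ≠ 0 := by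
    rw [biquadratic_eq_mul]
    refine mul_ne_zero (mul_ne_zero (mul_ne_zero ?_ ?_) ?_) ?_
    · exact fun h => h1 m (by linear_combination h)
    · exact fun h => h2 m (by linear_combination h)
    · exact fun h => h3 m (by linear_combination h)
    · exact fun h => h4 m (by linear_combination h)
  calc _ = ∑' k : ℕ, wzF a b 0 (α + k) :=
        tsum_congr fun k => by rw [wzF_zero, biquadratic, add_comm α]
    _ = ∑' n, wzG a b n α := tsum_wzF_zero_eq_tsum_wzG hα
    _ = _ := by simp only [wzG_eq, wzQuadratic, tsum_mul_left]
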